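/- arXiv:math/0305088 — 2 statements merged into one kernel-verified Lean document; each statement's English description precedes it below -/
import Mathlib

section
/- Let P, Q ∈ ℂ[x,y] be such that the map f = (P,Q) : ℂ² → ℂ² is dominant, P and Q monic in y with constant leading coefficients. A point (u₀,v₀) ∈ ℂ² is a non-proper value of f (i.e. there is a sequence p_i → ∞ in ℂ² with f(p_i) → (u₀,v₀)) if and only if the leading coefficient R_0(u,v) (in x) of Res_y(P − u, Q − v) vanishes at (u₀,v₀). -/
open Polynomial Filter

/-- The Sylvester matrix of two polynomials `p, q` regarded as having degrees `m, n`. -/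
noncomputable def sylvesterMatrix {R : Type*} [CommRing R] (m n : ℕ) (p q : Polynomial R) :
    Matrix (Fin (n + m)) (Fin (n + m)) R :=
  Matrix.of fun i j =>
    Fin.addCases
      (fun i₁ : Fin n =>
        if (i₁ : ℕ) ≤ (j : ℕ) ∧ (j : ℕ) ≤ m + (i₁ : ℕ) then p.coeff (m + (i₁ : ℕ) - (j : ℕ)) else 0)
      (fun i₂ : Fin m =>
        if (i₂ : ℕ) ≤ (j : ℕ) ∧ (j : ℕ) ≤ n + (i₂ : ℕ) then q.coeff (n + (i₂ : ℕ) - (j : ℕ)) else 0)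
      i

/-- The resultant of `p, q` regarded as having degrees `m, n`. -/
noncomputable def resultant {R : Type*} [CommRing R] (m n : ℕ) (p q : Polynomial R) : R :=
  (sylvesterMatrix m n p q).det

/-- `P ∈ ℂ[x][y]` reinterpreted as a polynomial in `y` over `ℂ[u,v][x]`, minus the
indeterminate `w` (`w = u` or `w = v`). -/
noncomputable def shifted (P : Polynomial (Polynomial ℂ)) (w : MvPolynomial (Fin 2) ℂ) :
    Polynomial (Polynomial (MvPolynomial (Fin 2) ℂ)) :=
  P.map (Polynomial.mapRingHom MvPolynomial.C) - C (C w)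


lemma aux_resultant_eq {R : Type*} [CommRing R] (m n : ℕ) (p q : Polynomial R) :
    _root_.resultant m n p q = Polynomial.resultant p q m n := by
  unfold _root_.resultant Polynomial.resultant
  rw [← Matrix.det_transpose,
    ← Matrix.det_submatrix_equiv_self (finCongr (add_comm n m)) (Polynomial.sylvester p q m n),
    ← Matrix.det_submatrix_equiv_self (Fin.revPerm : Equiv.Perm (Fin (n + m)))
      (Matrix.submatrix _ _ _)]
  congr 1
  ext i j
  simp only [Matrix.transpose_apply, Matrix.submatrix_apply, sylvesterMatrix,
    Polynomial.sylvester, Matrix.of_apply, Fin.addCases, Set.mem_Icc, eq_rec_constant,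
    finCongr_apply, Fin.revPerm_apply, Fin.val_cast, Fin.val_rev, Fin.val_castLT, Fin.val_subNat]
  have hi := i.isLt
  have hj := j.isLt
  by_cases h : (j : ℕ) < n
  · rw [dif_pos h, dif_neg (by lia)]
    refine ite_congr (by simp only [eq_iff_iff]; lia) (fun h => ?_) (fun _ => rfl)
    congr 1; lia
  · rw [dif_neg h, dif_pos (by lia)]
    refine ite_congr (by simp only [eq_iff_iff]; lia) (fun h => ?_) (fun _ => rfl)
    congr 1; lia

lemma aux_key (P Q : Polynomial (Polynomial ℂ)) (A B : ℂ) (hA : A ≠ 0) (hB : B ≠ 0)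
    (m n : ℕ) (hm : 0 < m) (hn : 0 < n)
    (hPdeg : P.natDegree = m) (hPl : P.leadingCoeff = C A)
    (hQdeg : Q.natDegree = n) (hQl : Q.leadingCoeff = C B) (u v x : ℂ) :
    ((_root_.resultant m n (shifted P (MvPolynomial.X 0)) (shifted Q (MvPolynomial.X 1))).map
      (MvPolynomial.eval ![u, v])).eval x = 0 ↔
    ∃ y, (P.eval (C y)).eval x = u ∧ (Q.eval (C y)).eval x = v := by
  set φ : Polynomial (MvPolynomial (Fin 2) ℂ) →+* ℂ :=
    (evalRingHom x).comp (mapRingHom (MvPolynomial.eval ![u, v])) with hφ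
  have hsh : ∀ (P : Polynomial (Polynomial ℂ)) (w : MvPolynomial (Fin 2) ℂ),
      (shifted P w).map φ = P.map (evalRingHom x) - C (MvPolynomial.eval ![u, v] w) := by
    intro P w
    have : φ.comp (mapRingHom MvPolynomial.C) = evalRingHom x := by
      ext a <;> simp [hφ]
    simp [shifted, Polynomial.map_sub, Polynomial.map_map, this]
    simp [hφ]
  have hev : ∀ (P : Polynomial (Polynomial ℂ)) (y : ℂ),
      (P.map (evalRingHom x)).eval y = (P.eval (C y)).eval x := by
    intro P y
    rw [← coe_evalRingHom x, ← Polynomial.eval_map_apply]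
    simp
  have hdeg : ∀ (P : Polynomial (Polynomial ℂ)) (A w : ℂ), A ≠ 0 → P.leadingCoeff = C A →
      (P.map (evalRingHom x) - C w).natDegree = P.natDegree := by
    intro P A w hA hP
    rw [natDegree_sub_C, natDegree_map_of_leadingCoeff_ne_zero]
    simpa [hP] using hA
  have h1 : ((_root_.resultant m n (shifted P (MvPolynomial.X 0))
      (shifted Q (MvPolynomial.X 1))).map (MvPolynomial.eval ![u, v])).eval x =
      Polynomial.resultant (P.map (evalRingHom x) - C u) (Q.map (evalRingHom x) - C v) := by
    rw [hdeg P A u hA hPl, hdeg Q B v hB hQl, hPdeg, hQdeg, aux_resultant_eq]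
    change φ _ = _
    rw [← Polynomial.resultant_map_map, hsh, hsh, MvPolynomial.eval_X, MvPolynomial.eval_X]
    rfl
  have hne : P.map (evalRingHom x) - C u ≠ 0 := by
    intro h
    have := hdeg P A u hA hPl
    rw [h, hPdeg] at this
    simp at this
    lia
  rw [h1, Polynomial.resultant_eq_zero_iff]
  constructor
  · rintro ⟨-, h⟩
    by_contra hcon
    apply h
    rw [isCoprime_iff_aeval_ne_zero_of_isAlgClosed ℂ ℂ]
    intro y
    by_contra hy
    push Not at hy
    apply hcon
    refine ⟨y, ?_, ?_⟩
    · rw [← hev]; simpa [sub_eq_zero] using hy.1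
    · rw [← hev]; simpa [sub_eq_zero] using hy.2
  · rintro ⟨y, hy1, hy2⟩
    refine ⟨Or.inl hne, ?_⟩
    rw [← hev] at hy1 hy2
    rintro ⟨a, b, hab⟩
    have := congrArg (eval y) hab
    simp only [eval_add, eval_mul, eval_sub, hy1, hy2, eval_C] at this
    simp at this

lemma aux_roots_bdd {T : Type*} [TopologicalSpace T] (p : T → ℂ[X]) (N : ℕ)
    (hN : ∀ t, (p t).natDegree ≤ N) (hc : ∀ i, Continuous fun t => (p t).coeff i)
    {S : Set T} (hS : IsCompact S) (h0 : ∀ t ∈ S, (p t).coeff N ≠ 0) :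
    ∃ M : ℝ, ∀ t ∈ S, ∀ z, (p t).eval z = 0 → ‖z‖ ≤ M := by
  have hcont : ContinuousOn (fun t => (∑ i ∈ Finset.range N, ‖(p t).coeff i‖) / ‖(p t).coeff N‖ + 1) S := by
    refine ContinuousOn.add (ContinuousOn.div ?_ ?_ ?_) continuousOn_const
    · exact (continuous_finsetSum _ fun i _ => (hc i).norm).continuousOn
    · exact (hc N).norm.continuousOn
    · intro t ht; simpa using h0 t ht
  obtain ⟨M, hM⟩ := hS.bddAbove_image hcont
  refine ⟨M, fun t ht z hz => ?_⟩
  refine le_trans ?_ (hM ⟨t, ht, rfl⟩)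
  have hd : (p t).natDegree = N := le_antisymm (hN t) (le_natDegree_of_ne_zero (h0 t ht))
  have hne : p t ≠ 0 := by
    intro h; apply h0 t ht; simp [h]
  have h := (Polynomial.IsRoot.norm_lt_cauchyBound hne (a := z) hz).le
  refine le_trans h ?_
  have hsup : (Finset.range N).sup (fun i => ‖(p t).coeff i‖₊) ≤
      ∑ i ∈ Finset.range N, ‖(p t).coeff i‖₊ :=
    Finset.sup_le fun i hi =>
      Finset.single_le_sum (f := fun i => ‖(p t).coeff i‖₊) (fun _ _ => zero_le) hi
  have hsup' : cauchyBound (p t) ≤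
      (∑ i ∈ Finset.range N, ‖(p t).coeff i‖₊) / ‖(p t).coeff N‖₊ + 1 := by
    unfold cauchyBound leadingCoeff
    rw [hd]
    gcongr
  have := NNReal.coe_le_coe.2 hsup'
  push_cast at this
  simpa using this

lemma aux_cont (p : MvPolynomial (Fin 2) ℂ) :
    Continuous fun t : ℂ × ℂ => MvPolynomial.eval ![t.1, t.2] p := by
  refine (MvPolynomial.continuous_eval p).comp ?_
  refine continuous_pi fun i => ?_
  fin_cases i <;> simp <;> fun_prop

/-- Points where a nonzero polynomial does not vanish accumulate everywhere. -/
lemma aux_approx (p : MvPolynomial (Fin 2) ℂ) (hp : p ≠ 0) (a : ℂ × ℂ) :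
    ∃ s : ℕ → ℂ × ℂ, Tendsto s atTop (nhds a) ∧ ∀ i, MvPolynomial.eval ![(s i).1, (s i).2] p ≠ 0 := by
  obtain ⟨b, hb⟩ : ∃ b : Fin 2 → ℂ, MvPolynomial.eval b p ≠ 0 := by
    by_contra h
    push Not at h
    exact hp (MvPolynomial.funext (by simpa using h))
  let g : ℂ[X] := MvPolynomial.aeval
    ![C a.1 + X * C (b 0 - a.1), C a.2 + X * C (b 1 - a.2)] p
  have hg : ∀ t : ℂ, g.eval t =
      MvPolynomial.eval ![a.1 + t * (b 0 - a.1), a.2 + t * (b 1 - a.2)] p := by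
    intro t
    simp only [g]
    rw [← coe_evalRingHom, MvPolynomial.aeval_def, MvPolynomial.hom_eval₂, MvPolynomial.eval,
      MvPolynomial.coe_eval₂Hom]
    congr 1
    · ext <;> simp
    · ext i; fin_cases i <;> simp
  have hg0 : g ≠ 0 := by
    intro h
    have := hg 1
    rw [h] at this
    apply hb
    have hbb : b = ![b 0, b 1] := by ext i; fin_cases i <;> rfl
    rw [hbb]
    simpa using this.symm
  have hfin : Set.Finite {t | g.IsRoot t} := Polynomial.finite_setOfPred_isRoot hg0
  have hden : Dense ({t | g.IsRoot t}ᶜ) := Set.Countable.dense_compl ℂ hfin.countable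
  obtain ⟨t, ht, htl⟩ := mem_closure_iff_seq_limit.1 (hden 0)
  refine ⟨fun i => (a.1 + t i * (b 0 - a.1), a.2 + t i * (b 1 - a.2)), ?_, ?_⟩
  · have : Continuous fun t : ℂ => (a.1 + t * (b 0 - a.1), a.2 + t * (b 1 - a.2)) := by fun_prop
    have h := (this.tendsto 0).comp htl
    simpa [Function.comp_def] using h
  · intro i
    have := ht i
    simp only [Set.mem_compl_iff, Set.mem_ofPred_eq, IsRoot.def, hg] at this
    exact this

/-- For a dominant `f = (P,Q)` with `P, Q` monic in `y` (constant leading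
coefficients), a point `(u₀,v₀)` is a non-proper value of `f` (some sequence `pᵢ → ∞` has
`f(pᵢ) → (u₀,v₀)`) iff the leading `x`-coefficient `R₀(u,v) ∈ ℂ[u,v]` of
`Res_y(P − u, Q − v)` vanishes at `(u₀, v₀)`. -/
theorem stmt_8 (P Q : Polynomial (Polynomial ℂ)) (A B : ℂ) (hA : A ≠ 0) (hB : B ≠ 0)
    (m n : ℕ) (hm : 0 < m) (hn : 0 < n)
    (hPdeg : P.natDegree = m) (hPl : P.leadingCoeff = C A)
    (hQdeg : Q.natDegree = n) (hQl : Q.leadingCoeff = C B)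
    (hdom : Dense (Set.range fun z : ℂ × ℂ =>
      ((P.eval (C z.2)).eval z.1, (Q.eval (C z.2)).eval z.1)))
    (hR0 : (resultant m n (shifted P (MvPolynomial.X 0)) (shifted Q (MvPolynomial.X 1))).leadingCoeff ≠ 0) :
    ∀ u₀ v₀ : ℂ,
      (∃ s : ℕ → ℂ × ℂ, Tendsto (fun i => ‖s i‖) atTop atTop ∧
          Tendsto (fun i => (((P.eval (C (s i).2)).eval (s i).1),
            ((Q.eval (C (s i).2)).eval (s i).1))) atTop (nhds (u₀, v₀)))
        ↔ MvPolynomial.eval ![u₀, v₀]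
            (resultant m n (shifted P (MvPolynomial.X 0)) (shifted Q (MvPolynomial.X 1))).leadingCoeff = 0 := by
  intro u₀ v₀
  have key := aux_key P Q A B hA hB m n hm hn hPdeg hPl hQdeg hQl
  set R := _root_.resultant m n (shifted P (MvPolynomial.X 0)) (shifted Q (MvPolynomial.X 1))
    with hR
  clear_value R
  have hev : ∀ (x y : ℂ), (P.map (evalRingHom x)).eval y = (P.eval (C y)).eval x := by
    intro x y
    rw [← coe_evalRingHom x, ← Polynomial.eval_map_apply]
    simp
  constructor
  · rintro ⟨s, hs, hlim⟩
    by_contra hne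
    have hU : {t : ℂ × ℂ | MvPolynomial.eval ![t.1, t.2] R.leadingCoeff ≠ 0} ∈ nhds (u₀, v₀) :=
      (isOpen_ne_fun (aux_cont _) continuous_const).mem_nhds hne
    obtain ⟨K, hK, hKU, hKc⟩ := local_compact_nhds hU
    obtain ⟨M₁, hM₁⟩ := aux_roots_bdd
      (fun t : ℂ × ℂ => R.map (MvPolynomial.eval ![t.1, t.2])) R.natDegree
      (fun t => natDegree_map_le) (fun i => by simpa using aux_cont (R.coeff i)) hKc
      (fun t ht => by simpa using hKU ht)
    obtain ⟨M₂, hM₂⟩ := aux_roots_bdd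
      (fun t : ℂ × (ℂ × ℂ) => P.map (evalRingHom t.1) - C t.2.1) m
      (fun t => by
        rw [natDegree_sub_C, ← hPdeg]; exact natDegree_map_le)
      (fun i => by
        simp only [coeff_sub, coeff_map, coe_evalRingHom, coeff_C]
        refine Continuous.sub ((P.coeff i).continuous.comp continuous_fst) ?_
        split_ifs <;> fun_prop)
      ((isCompact_closedBall (0 : ℂ) M₁).prod hKc)
      (fun t ht => by
        have : P.coeff m = C A := by rw [← hPl, leadingCoeff, hPdeg]
        simpa [this, coeff_C, hm.ne'] using hA)
    have h1 := hlim.eventually_mem hK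
    have h2 := hs.eventually_gt_atTop (max M₁ M₂)
    obtain ⟨i, hi1, hi2⟩ := (h1.and h2).exists
    have hx := hM₁ _ hi1 (s i).1 ((key _ _ _).2 ⟨(s i).2, rfl, rfl⟩)
    have hy := hM₂ ((s i).1, (_, _)) ⟨by simpa using hx, hi1⟩ (s i).2 (by simp [hev])
    rw [Prod.norm_def] at hi2
    exact absurd hi2 (not_lt.2 (max_le_max hx hy))
  · intro h0
    suffices H : ∀ k : ℕ, ∃ z : ℂ × ℂ, (k : ℝ) ≤ ‖z‖ ∧
        dist (((P.eval (C z.2)).eval z.1), ((Q.eval (C z.2)).eval z.1)) (u₀, v₀) <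
          1 / ((k : ℝ) + 1) by
      choose s hs1 hs2 using H
      refine ⟨s, tendsto_atTop_mono hs1 tendsto_natCast_atTop_atTop, ?_⟩
      rw [tendsto_iff_dist_tendsto_zero]
      exact squeeze_zero (fun _ => dist_nonneg) (fun i => (hs2 i).le)
        tendsto_one_div_add_atTop_nhds_zero_nat
    intro k
    by_contra hcon
    push Not at hcon
    have hε : (0 : ℝ) < 1 / ((k : ℝ) + 1) := by positivity
    -- all roots near the point are bounded by `k`
    have hroot : ∀ t : ℂ × ℂ, dist t (u₀, v₀) < 1 / ((k : ℝ) + 1) → ∀ x,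
        (R.map (MvPolynomial.eval ![t.1, t.2])).eval x = 0 → ‖x‖ ≤ k := by
      intro t ht x hx
      obtain ⟨y, hy1, hy2⟩ := (key _ _ _).1 hx
      by_contra hk
      have := hcon (x, y) (le_trans (not_le.1 hk).le (le_max_left _ _))
      simp only [hy1, hy2] at this
      exact absurd ht (not_lt.2 this)
    obtain ⟨s, hs, hs0⟩ := aux_approx R.leadingCoeff hR0 (u₀, v₀)
    -- hence the polynomial at the point vanishes identically
    have hzero : ∀ x, (R.map (MvPolynomial.eval ![u₀, v₀])).eval x = 0 := by
      intro x
      have hcx : Continuous fun t : ℂ × ℂ =>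
          (R.map (MvPolynomial.eval ![t.1, t.2])).eval x := by
        simp only [eval_map, eval₂_eq_sum_range]
        exact continuous_finsetSum _ fun i _ => (aux_cont _).mul continuous_const
      have hl1 := ((hcx.tendsto (u₀, v₀)).comp hs).norm
      have hl2 := (((aux_cont R.leadingCoeff).tendsto (u₀, v₀)).comp hs).norm.mul_const
        ((‖x‖ + k) ^ R.natDegree)
      have hle : ∀ᶠ i in atTop, ‖(R.map (MvPolynomial.eval ![(s i).1, (s i).2])).eval x‖ ≤
          ‖MvPolynomial.eval ![(s i).1, (s i).2] R.leadingCoeff‖ *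
            (‖x‖ + k) ^ R.natDegree := by
        filter_upwards [hs.eventually (Metric.ball_mem_nhds _ hε)] with i hi
        have hsp := IsAlgClosed.splits (R.map (MvPolynomial.eval ![(s i).1, (s i).2]))
        rw [hsp.eval_eq_prod_roots, norm_mul,
          leadingCoeff_map_of_leadingCoeff_ne_zero _ (hs0 i)]
        gcongr
        have hdeg : R.natDegree =
            (R.map (MvPolynomial.eval ![(s i).1, (s i).2])).roots.card := by
          rw [← hsp.natDegree_eq_card_roots, natDegree_map_of_leadingCoeff_ne_zero _ (hs0 i)]
        rw [hdeg, ← Multiset.card_map (fun a => x - a)]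
        have hnorm : ∀ S : Multiset ℂ, (∀ a ∈ S, ‖a‖ ≤ ‖x‖ + k) →
            ‖S.prod‖ ≤ (‖x‖ + k) ^ S.card := by
          intro S
          induction S using Multiset.induction_on with
          | empty => simp
          | cons a S ih =>
            intro h
            rw [Multiset.prod_cons, norm_mul, Multiset.card_cons, pow_succ']
            exact mul_le_mul (h a (by simp)) (ih fun b hb => h b (by simp [hb]))
              (norm_nonneg _) (by positivity)
        apply hnorm
        intro a ha
        obtain ⟨r, hr, rfl⟩ := Multiset.mem_map.1 ha
        refine (norm_sub_le _ _).trans ?_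
        gcongr
        exact hroot _ hi r (isRoot_of_mem_roots hr)
      have := le_of_tendsto_of_tendsto hl1 hl2 hle
      simpa [h0] using this
    have := hroot (u₀, v₀) (by simpa using hε) ((k : ℂ) + 1) (hzero _)
    rw [show ((k : ℂ) + 1) = ((k + 1 : ℕ) : ℂ) by push_cast; rfl, Complex.norm_natCast] at this
    push_cast at this
    linarith
end

section
/- For a dominant polynomial map f : ℂ² → ℂ², the non-proper value set A_f is closed in ℂ². -/
open MvPolynomial Filter

/-- For a dominant polynomial map `f = (P,Q) : ℂ² → ℂ²`, the non-proper
value set `A_f = {a : ∃ pᵢ → ∞ with f(pᵢ) → a}` is closed in `ℂ²`. -/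
theorem stmt_9 (P Q : MvPolynomial (Fin 2) ℂ)
    (hdom : Dense (Set.range fun z : ℂ × ℂ => (eval ![z.1, z.2] P, eval ![z.1, z.2] Q))) :
    IsClosed {a : ℂ × ℂ | ∃ s : ℕ → ℂ × ℂ,
      Tendsto (fun i => ‖s i‖) atTop atTop ∧
      Tendsto (fun i => (eval ![(s i).1, (s i).2] P, eval ![(s i).1, (s i).2] Q))
        atTop (nhds a)} := by
  rw [← closure_subset_iff_isClosed]
  intro a ha
  have key : ∀ n : ℕ, ∃ p : ℂ × ℂ, (n : ℝ) ≤ ‖p‖ ∧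
      dist (eval ![p.1, p.2] P, eval ![p.1, p.2] Q) a < 2 * (1 / ((n : ℝ) + 1)) := by
    intro n
    have hn : (0 : ℝ) < 1 / ((n : ℝ) + 1) := by positivity
    obtain ⟨b, ⟨s, hs1, hs2⟩, hb⟩ := Metric.mem_closure_iff.1 ha _ hn
    have h1 := hs1.eventually_ge_atTop (n : ℝ)
    have h2 := Metric.tendsto_nhds.1 hs2 _ hn
    obtain ⟨i, hi1, hi2⟩ := (h1.and h2).exists
    refine ⟨s i, hi1, ?_⟩
    have h3 := dist_triangle (eval ![(s i).1, (s i).2] P, eval ![(s i).1, (s i).2] Q) b a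
    rw [dist_comm a b] at hb
    linarith
  choose s hs1 hs2 using key
  refine ⟨s, tendsto_atTop_mono hs1 tendsto_natCast_atTop_atTop, ?_⟩
  rw [tendsto_iff_dist_tendsto_zero]
  have hlim : Tendsto (fun n : ℕ => 2 * (1 / ((n : ℝ) + 1))) atTop (nhds 0) := by
    simpa using (tendsto_one_div_add_atTop_nhds_zero_nat (𝕜 := ℝ)).const_mul 2
  exact squeeze_zero (fun _ => dist_nonneg) (fun n => (hs2 n).le) hlim
end
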